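/- Let p ≥ 1 and c > 0. The connected component containing 0 of the set {Y ∈ ℝᵖ : for all Y′ ∈ ℝᵖ, 1 + c(‖Y′‖² − ‖Y‖²) − 2ic⟨Y, Y′⟩ ≠ 0} (a nonvanishing condition on a complex number, i the imaginary unit) is exactly the open ball {Y ∈ ℝᵖ : c‖Y‖² < 1}. -/

import Mathlib

open scoped RealInnerProductSpace

/-- for `p ≥ 1` and `c > 0`, the connected component containing `0` of
`{Y ∈ ℝᵖ : ∀ Y', 1 + c(‖Y'‖² − ‖Y‖²) − 2ic⟪Y,Y'⟫ ≠ 0}` is exactly the open ball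
`{Y : c‖Y‖² < 1}`. -/
theorem stmt_18 (p : ℕ) (hp : 1 ≤ p) (c : ℝ) (hc : 0 < c) :
    connectedComponentIn
      {Y : EuclideanSpace ℝ (Fin p) | ∀ Y' : EuclideanSpace ℝ (Fin p),
        ((1 + c * (‖Y'‖ ^ 2 - ‖Y‖ ^ 2) : ℝ) : ℂ) -
          2 * (c : ℂ) * ((⟪Y, Y'⟫ : ℝ) : ℂ) * Complex.I ≠ 0}
      0 =
    {Y : EuclideanSpace ℝ (Fin p) | c * ‖Y‖ ^ 2 < 1} := by
  set S := {Y : EuclideanSpace ℝ (Fin p) | ∀ Y' : EuclideanSpace ℝ (Fin p),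
        ((1 + c * (‖Y'‖ ^ 2 - ‖Y‖ ^ 2) : ℝ) : ℂ) -
          2 * (c : ℂ) * ((⟪Y, Y'⟫ : ℝ) : ℂ) * Complex.I ≠ 0} with hS
  have hsub : {Y : EuclideanSpace ℝ (Fin p) | c * ‖Y‖ ^ 2 < 1} ⊆ S := by
    intro Y hY Y' h
    have hre := congrArg Complex.re h
    simp only [Complex.sub_re, Complex.ofReal_re, Complex.mul_re, Complex.mul_im,
      Complex.ofReal_im, Complex.I_re, Complex.I_im, Complex.re_ofNat, Complex.im_ofNat,
      Complex.zero_re] at hre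
    have hY2 : c * ‖Y‖ ^ 2 < 1 := hY
    have : 0 ≤ c * ‖Y'‖ ^ 2 := by positivity
    nlinarith
  have h0 : (0 : EuclideanSpace ℝ (Fin p)) ∈ {Y : EuclideanSpace ℝ (Fin p) | c * ‖Y‖ ^ 2 < 1} := by
    simp
  apply Set.Subset.antisymm
  · intro Y hY
    by_contra hlt
    have hge : 1 ≤ c * ‖Y‖ ^ 2 := not_lt.mp hlt
    have hpre : IsPreconnected (connectedComponentIn S 0) := isPreconnected_connectedComponentIn
    have hcont : ContinuousOn (fun Z : EuclideanSpace ℝ (Fin p) => c * ‖Z‖ ^ 2)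
        (connectedComponentIn S 0) := by fun_prop
    obtain ⟨Z, hZ, hZ1⟩ := hpre.intermediate_value
      (mem_connectedComponentIn (hsub h0)) hY hcont
      (show (1 : ℝ) ∈ Set.Icc _ _ from ⟨by simp, hge⟩)
    have hZ1 : c * ‖Z‖ ^ 2 = 1 := hZ1
    apply connectedComponentIn_subset S 0 hZ 0
    have : 1 + c * (‖(0 : EuclideanSpace ℝ (Fin p))‖ ^ 2 - ‖Z‖ ^ 2) = 0 := by
      rw [norm_zero]; linarith
    rw [this]; simp
  · refine IsPreconnected.subset_connectedComponentIn ?_ h0 hsub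
    have hb : {Y : EuclideanSpace ℝ (Fin p) | c * ‖Y‖ ^ 2 < 1} = Metric.ball 0 (√(1 / c)) := by
      ext Y
      rw [mem_ball_zero_iff, Real.lt_sqrt (norm_nonneg _), lt_div_iff₀ hc, mul_comm]
      rfl
    rw [hb]
    exact (convex_ball _ _).isPreconnected
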